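/- arXiv:2102.13608 — 3 statements merged into one kernel-verified Lean document; each statement's English description precedes it below -/
import Mathlib

section
/- Let λ ≠ 1 be a generalized eigenvalue of the pencil (M, P) with eigenvector p = (p_s, p_l) ∈ ℝ^{s+l}, i.e., M p = λ P p and p ≠ 0. Then p_s ≠ 0, p_l ≠ 0, p_s = (λ−1)⁻¹ M₁⁻¹ M₂ᵀ p_l, and ν = (λ−1)² satisfies both generalized eigenproblems (M₂ M₁⁻¹ M₂ᵀ) p_l = ν M₃ p_l and (M₂ᵀ M₃⁻¹ M₂) p_s = ν M₁ p_s. -/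
open Matrix

/-- If `λ ≠ 1` is a generalized eigenvalue of the pencil `(M, P)` with
`M = [[M₁, M₂ᵀ],[M₂, M₃]] ≻ 0` and `P = [[M₁, 0],[0, M₃]]`, and eigenvector
`p = (p_s, p_l)`, then `p_s ≠ 0`, `p_l ≠ 0`, `p_s = (λ−1)⁻¹ M₁⁻¹ M₂ᵀ p_l`, and
`ν = (λ−1)²` satisfies `(M₂ M₁⁻¹ M₂ᵀ) p_l = ν M₃ p_l` and `(M₂ᵀ M₃⁻¹ M₂) p_s = ν M₁ p_s`. -/
theorem eigenvector_structure_for_nonunit_eigenvalues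
    {s l : ℕ} (hs : 0 < s) (hl : 0 < l)
    (M1 : Matrix (Fin s) (Fin s) ℝ) (M2 : Matrix (Fin l) (Fin s) ℝ)
    (M3 : Matrix (Fin l) (Fin l) ℝ)
    (M P : Matrix (Fin s ⊕ Fin l) (Fin s ⊕ Fin l) ℝ)
    (hMdef : M = fromBlocks M1 M2ᵀ M2 M3) (hM : M.PosDef)
    (hPdef : P = fromBlocks M1 0 0 M3)
    (lam : ℝ) (hlam : lam ≠ 1) (p : Fin s ⊕ Fin l → ℝ) (hp : p ≠ 0)
    (heig : M *ᵥ p = lam • (P *ᵥ p)) :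
    (fun i => p (Sum.inl i)) ≠ 0 ∧
    (fun j => p (Sum.inr j)) ≠ 0 ∧
    (fun i => p (Sum.inl i)) =
      (lam - 1)⁻¹ • (M1⁻¹ *ᵥ (M2ᵀ *ᵥ fun j => p (Sum.inr j))) ∧
    (M2 * M1⁻¹ * M2ᵀ) *ᵥ (fun j => p (Sum.inr j)) =
      (lam - 1) ^ 2 • (M3 *ᵥ fun j => p (Sum.inr j)) ∧
    (M2ᵀ * M3⁻¹ * M2) *ᵥ (fun i => p (Sum.inl i)) =
      (lam - 1) ^ 2 • (M1 *ᵥ fun i => p (Sum.inl i)) := by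
  subst hMdef hPdef
  have h1 : M1.PosDef := by
    have := hM.submatrix (e := (Sum.inl : Fin s → Fin s ⊕ Fin l)) Sum.inl_injective
    exact this
  have h3 : M3.PosDef := by
    have := hM.submatrix (e := (Sum.inr : Fin l → Fin s ⊕ Fin l)) Sum.inr_injective
    exact this
  have u1 : IsUnit M1.det := (Matrix.isUnit_iff_isUnit_det _).1 h1.isUnit
  have u3 : IsUnit M3.det := (Matrix.isUnit_iff_isUnit_det _).1 h3.isUnit
  have hc : lam - 1 ≠ 0 := sub_ne_zero.2 hlam
  obtain ⟨x, hx⟩ : ∃ x : Fin s → ℝ, x = fun i => p (Sum.inl i) := ⟨_, rfl⟩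
  obtain ⟨y, hy⟩ : ∃ y : Fin l → ℝ, y = fun i => p (Sum.inr i) := ⟨_, rfl⟩
  have hpe : p = Sum.elim x y := by
    subst hx hy
    ext (i | i) <;> rfl
  rw [← hx, ← hy]
  rw [hpe] at heig hp
  rw [fromBlocks_mulVec, fromBlocks_mulVec] at heig
  have e1 : M2ᵀ *ᵥ y = (lam - 1) • (M1 *ᵥ x) := by
    ext i
    have := congrFun heig (Sum.inl i)
    simp [Function.comp_def] at this
    simp
    linarith
  have e2 : M2 *ᵥ x = (lam - 1) • (M3 *ᵥ y) := by
    ext i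
    have := congrFun heig (Sum.inr i)
    simp [Function.comp_def] at this
    simp
    linarith
  have f1 : M1⁻¹ *ᵥ (M2ᵀ *ᵥ y) = (lam - 1) • x := by
    rw [e1, mulVec_smul, mulVec_mulVec, nonsing_inv_mul _ u1, one_mulVec]
  have f3 : M3⁻¹ *ᵥ (M2 *ᵥ x) = (lam - 1) • y := by
    rw [e2, mulVec_smul, mulVec_mulVec, nonsing_inv_mul _ u3, one_mulVec]
  refine ⟨?_, ?_, ?_, ?_, ?_⟩
  · intro h0
    apply hp
    rw [h0, mulVec_zero, mulVec_zero] at f3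
    have hy0 : y = 0 := (smul_eq_zero.1 f3.symm).resolve_left hc
    rw [h0, hy0]
    ext (i | i) <;> rfl
  · intro h0
    apply hp
    rw [h0, mulVec_zero, mulVec_zero] at f1
    have hx0 : x = 0 := (smul_eq_zero.1 f1.symm).resolve_left hc
    rw [h0, hx0]
    ext (i | i) <;> rfl
  · rw [f1, smul_smul, inv_mul_cancel₀ hc, one_smul]
  · rw [← mulVec_mulVec, ← mulVec_mulVec, f1, mulVec_smul, e2, smul_smul, sq]
  · rw [← mulVec_mulVec, ← mulVec_mulVec, f3, mulVec_smul, e1, smul_smul, sq]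
end

section
/- Every generalized eigenvalue λ of the pencil (M, P) satisfies 0 < λ < 2; more precisely, every generalized eigenvalue lies in (0, 1) ∪ {1} ∪ (1, 2). -/
open Matrix

/-- For the pencil `(M, P)` with `M = [[M₁, M₂ᵀ],[M₂, M₃]]` symmetric
positive definite and `P = [[M₁, 0],[0, M₃]]`, every generalized eigenvalue `λ`
lies in `(0, 1) ∪ {1} ∪ (1, 2)` (in particular `0 < λ < 2`). -/
theorem generalized_eigenvalues_of_block_pencil_in_unit_intervals
    {s l : ℕ} (hs : 0 < s) (hl : 0 < l)
    (M1 : Matrix (Fin s) (Fin s) ℝ) (M2 : Matrix (Fin l) (Fin s) ℝ)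
    (M3 : Matrix (Fin l) (Fin l) ℝ)
    (M P : Matrix (Fin s ⊕ Fin l) (Fin s ⊕ Fin l) ℝ)
    (hMdef : M = fromBlocks M1 M2ᵀ M2 M3) (hM : M.PosDef)
    (hPdef : P = fromBlocks M1 0 0 M3)
    (lam : ℝ) (p : Fin s ⊕ Fin l → ℝ) (hp : p ≠ 0)
    (heig : M *ᵥ p = lam • (P *ᵥ p)) :
    (0 < lam ∧ lam < 1) ∨ lam = 1 ∨ (1 < lam ∧ lam < 2) := by
  obtain ⟨x, y, rfl⟩ : ∃ x y, p = Sum.elim x y :=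
    ⟨p ∘ Sum.inl, p ∘ Sum.inr, (Sum.elim_comp_inl_inr p).symm⟩
  have hq : Sum.elim x (-y) ≠ 0 := by
    intro h
    apply hp
    funext i
    have hi := congrFun h i
    rcases i with i | i <;> simpa using hi
  have ha := hM.dotProduct_mulVec_pos hp
  have hb := hM.dotProduct_mulVec_pos hq
  have hc := congrArg (fun v => Sum.elim x y ⬝ᵥ v) heig
  simp only [dotProduct_smul, smul_eq_mul] at hc
  rw [star_trivial] at ha hb
  have hsum : Sum.elim x y ⬝ᵥ (M *ᵥ Sum.elim x y)
      + Sum.elim x (-y) ⬝ᵥ (M *ᵥ Sum.elim x (-y))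
      = 2 * (Sum.elim x y ⬝ᵥ (P *ᵥ Sum.elim x y)) := by
    subst hMdef hPdef
    simp only [fromBlocks_mulVec, sumElim_dotProduct_sumElim, Sum.elim_comp_inl,
      Sum.elim_comp_inr, mulVec_neg, dotProduct_add, dotProduct_neg, neg_dotProduct,
      zero_mulVec, dotProduct_zero]
    ring
  generalize Sum.elim x y ⬝ᵥ (P *ᵥ Sum.elim x y) = c at *
  have hcpos : 0 < c := by linarith
  have h0 : 0 < lam := by
    rw [hc] at ha
    exact pos_of_mul_pos_left ha hcpos.le
  have h2 : lam < 2 := by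
    by_contra h
    nlinarith
  rcases lt_trichotomy lam 1 with h | h | h
  · exact Or.inl ⟨h0, h⟩
  · exact Or.inr (Or.inl h)
  · exact Or.inr (Or.inr ⟨h, h2⟩)
end

section
/- Let A be a real m×n matrix, ρ > 0, δ > 0, and let H be a real symmetric positive-definite n×n matrix such that H − ρ·I_n is positive semidefinite. Then the matrix A H⁻¹ Aᵀ + δ·I_m is symmetric positive definite and all of its eigenvalues lie in the interval [δ, σ_max(A)²/ρ + δ], where σ_max(A) is the largest singular value of A; in particular λ_min(A H⁻¹ Aᵀ + δ I_m) ≥ δ and λ_max(A H⁻¹ Aᵀ + δ I_m) ≤ σ_max(A)²/ρ + δ. -/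
open Matrix

/-- The largest singular value of a real matrix `A`: the operator norm of the induced
linear map between Euclidean spaces. -/
noncomputable def sigmaMax {m n : Type*} [Fintype m] [Fintype n] [DecidableEq n]
    (A : Matrix m n ℝ) : ℝ :=
  ‖LinearMap.toContinuousLinearMap (Matrix.toEuclideanLin A)‖

/-- For `A ∈ ℝ^{m×n}`, `ρ, δ > 0`, and `H ≻ 0` with `H − ρI ⪰ 0`,
the matrix `A H⁻¹ Aᵀ + δ I` is symmetric positive definite and its eigenvalues lie in
`[δ, σ_max(A)²/ρ + δ]`. -/
theorem schur_complement_eigenvalue_bounds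
    {m n : ℕ} (A : Matrix (Fin m) (Fin n) ℝ) (ρ δ : ℝ) (hρ : 0 < ρ) (hδ : 0 < δ)
    (H : Matrix (Fin n) (Fin n) ℝ) (hH : H.PosDef)
    (hHρ : (H - ρ • (1 : Matrix (Fin n) (Fin n) ℝ)).PosSemidef) :
    (A * H⁻¹ * Aᵀ + δ • (1 : Matrix (Fin m) (Fin m) ℝ)).PosDef ∧
    ∀ (hB : (A * H⁻¹ * Aᵀ + δ • (1 : Matrix (Fin m) (Fin m) ℝ)).IsHermitian)
      (i : Fin m),
        δ ≤ hB.eigenvalues i ∧ hB.eigenvalues i ≤ (sigmaMax A) ^ 2 / ρ + δ := by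
  have hPSD : (A * H⁻¹ * Aᵀ).PosSemidef := by
    have := hH.inv.posSemidef.mul_mul_conjTranspose_same A
    simpa [Matrix.conjTranspose_eq_transpose_of_trivial] using this
  refine ⟨?_, ?_⟩
  · exact Matrix.PosDef.posSemidef_add hPSD (Matrix.PosDef.one.smul hδ)
  intro hB i
  have hev := hB.eigenvalues_eq i
  have hnorm : ‖hB.eigenvectorBasis i‖ = 1 := hB.eigenvectorBasis.orthonormal.1 i
  generalize hB.eigenvectorBasis i = v at hev hnorm
  generalize hB.eigenvalues i = l at hev
  set x : Fin m → ℝ := v.ofLp with hx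
  have hxx : x ⬝ᵥ x = 1 := by
    have h := EuclideanSpace.real_norm_sq_eq v
    rw [hnorm] at h
    simp only [dotProduct, hx]
    rw [one_pow] at h
    rw [h]
    exact Finset.sum_congr rfl fun j _ => (sq _).symm
  have hl : l = x ⬝ᵥ ((A * H⁻¹ * Aᵀ) *ᵥ x) + δ := by
    rw [hev]
    simp [Matrix.add_mulVec, Matrix.smul_mulVec, dotProduct_add, hxx]
  have hs0 : 0 ≤ x ⬝ᵥ ((A * H⁻¹ * Aᵀ) *ᵥ x) := by
    simpa using hPSD.dotProduct_mulVec_nonneg x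
  set z : Fin n → ℝ := H⁻¹ *ᵥ (Aᵀ *ᵥ x) with hz
  have hs1 : (A * H⁻¹ * Aᵀ) *ᵥ x = A *ᵥ z := by
    simp [hz, Matrix.mulVec_mulVec, Matrix.mul_assoc]
  have hHz : H *ᵥ z = Aᵀ *ᵥ x := by
    rw [hz, Matrix.mulVec_mulVec, Matrix.mul_nonsing_inv _ ((Matrix.isUnit_iff_isUnit_det _).1 hH.isUnit),
      Matrix.one_mulVec]
  have hs2 : x ⬝ᵥ (A *ᵥ z) = z ⬝ᵥ (H *ᵥ z) := by
    rw [hHz, Matrix.dotProduct_mulVec, Matrix.mulVec_transpose, dotProduct_comm]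
  have hρz : ρ * (z ⬝ᵥ z) ≤ x ⬝ᵥ (A *ᵥ z) := by
    have h := hHρ.dotProduct_mulVec_nonneg z
    simp [Matrix.sub_mulVec, Matrix.smul_mulVec, dotProduct_sub] at h
    rw [hs2]; exact h
  have hzz : z ⬝ᵥ z = ‖WithLp.toLp 2 z‖ ^ 2 := by
    rw [EuclideanSpace.real_norm_sq_eq]
    exact Finset.sum_congr rfl fun j _ => (sq _).symm
  have hcs : x ⬝ᵥ (A *ᵥ z) ≤ sigmaMax A * ‖WithLp.toLp 2 z‖ := by
    have h1 := real_inner_le_norm v (Matrix.toEuclideanLin A (WithLp.toLp 2 z))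
    have h2 := (LinearMap.toContinuousLinearMap (Matrix.toEuclideanLin A)).le_opNorm
      (WithLp.toLp 2 z)
    have h3 : inner ℝ v (Matrix.toEuclideanLin A (WithLp.toLp 2 z)) = x ⬝ᵥ (A *ᵥ z) := by
      simp [EuclideanSpace.inner_eq_star_dotProduct, dotProduct_comm, hx]
    rw [h3, hnorm, one_mul] at h1
    exact h1.trans h2
  rw [hs1] at hl hs0
  rw [hzz] at hρz
  refine ⟨by linarith, ?_⟩
  rw [hl]
  gcongr
  rw [le_div_iff₀ hρ]
  generalize x ⬝ᵥ (A *ᵥ z) = s at *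
  generalize ‖WithLp.toLp 2 z‖ = t at *
  generalize sigmaMax A = σ at *
  rcases hs0.eq_or_lt with h | h
  · rw [← h, zero_mul]; positivity
  · have h1 : s ^ 2 ≤ (σ * t) ^ 2 := by gcongr
    have h2 : ρ * s ^ 2 ≤ σ ^ 2 * s := by
      nlinarith [mul_le_mul_of_nonneg_left hρz (sq_nonneg σ)]
    nlinarith
end
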